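/- Let δ ≥ 3 be an integer, let G be a graph with minimum degree at least δ, let D ⊆ V(G), and let ω, β1, β2, β3, β4 be positive reals satisfying, with ε_i = β_i − β_{i−1} for i ∈ {2,3,4}: ω ≥ β4 ≥ β3 ≥ β2 ≥ β1 > 0, ε4 ≤ ε3 ≤ ε2 ≤ β1, ω + 3(ω−β2) + 4(δ−3)ε4 ≥ 1, and β4 + 4(ω−β2) + 4(δ−3)ε4 ≥ 1. Suppose in the isolation residual graph G_D^ι every white vertex has at most 3 white neighbors and every blue vertex has degree at most 4. If some white vertex has exactly 3 white neighbors or some blue vertex has degree exactly 4 in G_D^ι, then there exists a D-desirable set consisting of a single vertex. -/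

import Mathlib

open Classical

/-- The closed neighborhood `N[D]` of a set `D` of vertices. -/
def closedNbhd {V : Type*} (G : SimpleGraph V) (D : Set V) : Set V :=
  {v | v ∈ D ∨ ∃ u ∈ D, G.Adj u v}

/-- `S` is an isolating set of `G`: deleting `N[S]` leaves no edge. -/
def IsIsolatingSet {V : Type*} (G : SimpleGraph V) (S : Set V) : Prop :=
  ∀ u v : V, G.Adj u v → u ∈ closedNbhd G S ∨ v ∈ closedNbhd G S

/-- The isolation number: the minimum cardinality of an isolating set. -/
noncomputable def isolationNumber {V : Type*} [Fintype V] (G : SimpleGraph V) : ℕ :=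
  sInf {k | ∃ S : Set V, IsIsolatingSet G S ∧ S.ncard = k}

/-- A vertex is white (w.r.t. `D`) if it lies outside `N[D]` and has a neighbor outside `N[D]`. -/
def IsWhite {V : Type*} (G : SimpleGraph V) (D : Set V) (v : V) : Prop :=
  v ∉ closedNbhd G D ∧ ∃ u, G.Adj v u ∧ u ∉ closedNbhd G D

/-- A vertex is blue (w.r.t. `D`) if it lies in `N[D]` and has a white neighbor. -/
def IsBlue {V : Type*} (G : SimpleGraph V) (D : Set V) (v : V) : Prop :=
  v ∈ closedNbhd G D ∧ ∃ u, G.Adj v u ∧ IsWhite G D u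

/-- The isolation residual graph `G_D^ι`: its edges are the edges of `G` incident
with at least one white vertex. -/
def residualGraph {V : Type*} (G : SimpleGraph V) (D : Set V) : SimpleGraph V where
  Adj u v := G.Adj u v ∧ (IsWhite G D u ∨ IsWhite G D v)
  symm := ⟨fun u v h => ⟨h.1.symm, h.2.symm⟩⟩
  loopless := ⟨fun v h => G.loopless.irrefl v h.1⟩

/-- The degree of a vertex in the isolation residual graph. -/
noncomputable def resDegree {V : Type*} (G : SimpleGraph V) (D : Set V) (v : V) : ℕ :=
  ((residualGraph G D).neighborSet v).ncard

/-- The number of white neighbors of a vertex. -/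
noncomputable def whiteNbhdCount {V : Type*} (G : SimpleGraph V) (D : Set V) (v : V) : ℕ :=
  {u | G.Adj v u ∧ IsWhite G D u}.ncard

/-- The weight of a vertex in the isolation residual graph. -/
noncomputable def vertexWeight {V : Type*} (G : SimpleGraph V) (D : Set V)
    (ω β1 β2 β3 β4 : ℝ) (v : V) : ℝ :=
  if IsWhite G D v then ω
  else if IsBlue G D v then
    if 4 ≤ resDegree G D v then β4
    else if resDegree G D v = 3 then β3
    else if resDegree G D v = 2 then β2
    else β1
  else 0

/-- The total weight `w(G_D^ι)` of the isolation residual graph. -/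
noncomputable def totalWeight {V : Type*} [Fintype V] (G : SimpleGraph V) (D : Set V)
    (ω β1 β2 β3 β4 : ℝ) : ℝ :=
  ∑ v : V, vertexWeight G D ω β1 β2 β3 β4 v

/-- `A ⊆ V(G) \ D` is `D`-desirable if the weight decrease from `D` to `D ∪ A`
is at least `|A|`. -/
def Desirable {V : Type*} [Fintype V] (G : SimpleGraph V) (ω β1 β2 β3 β4 : ℝ)
    (D A : Set V) : Prop :=
  A ⊆ Dᶜ ∧
    (A.ncard : ℝ) ≤ totalWeight G D ω β1 β2 β3 β4 - totalWeight G (D ∪ A) ω β1 β2 β3 β4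

/-- `G` is alluring w.r.t. the weights if for every `D` that is not an isolating set
there exists a `D`-desirable set. -/
def Alluring {V : Type*} [Fintype V] (G : SimpleGraph V) (ω β1 β2 β3 β4 : ℝ) : Prop :=
  ∀ D : Set V, ¬ IsIsolatingSet G D → ∃ A : Set V, Desirable G ω β1 β2 β3 β4 D A

/-- `C` is the vertex set of a connected component of the subgraph of `G_D^ι`
induced by the white vertices. -/
def IsWhiteComponent {V : Type*} (G : SimpleGraph V) (D : Set V) (C : Set V) : Prop :=
  C ⊆ {v | IsWhite G D v} ∧ (G.induce C).Connected ∧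
    ∀ u ∈ C, ∀ v : V, IsWhite G D v → G.Adj u v → v ∈ C

/-!
Weigh a vertex that is not white by a function `f` of its number of white neighbors, red vertices
being the case of no white neighbor. When a vertex `a` joins `D`, all white vertices of `N[a]`
stop being white, and the weight drops in three places. The vertex `a` loses its whole weight.
Each white neighbor of `a` keeps at most two white neighbors, hence goes from `ω` to at most
`β2`. Finally, by minimum degree, each white vertex of `N[a]` has at least `δ - 3` non-white
neighbors other than `a`, and concavity of `f` makes each such edge worth at least `β4 - β3`.

If some white vertex has three white neighbors, take it for `a`. Otherwise white vertices have at
most two white neighbors, and a blue vertex of degree 4 serves as `a`, being the third neighbor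
to discard in the count of `δ - 3`. In both cases `N[a]` has exactly four white vertices.
-/

section Sums

open Finset

theorem mul_sub_le_sub_of_forall_lt {R : Type*} [CommRing R] [LinearOrder R]
    [IsStrictOrderedRing R] {f : ℕ → R} {ε : R} {Δ e d : ℕ}
    (hfε : ∀ i < Δ, ε ≤ f (i + 1) - f i) (hed : e ≤ d) (hd : d ≤ Δ) :
    ε * ((d : R) - e) ≤ f d - f e := by
  induction d, hed using Nat.le_induction with
  | base => simp
  | succ d _ ih =>
    push_cast
    linarith [ih (by omega), hfε d (by omega)]

theorem add_sum_add_sum_compl_le_sum {ι M : Type*} [Fintype ι] [AddCommMonoid M] [PartialOrder M]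
    [IsOrderedAddMonoid M] {g : ι → M} (hg : ∀ i, 0 ≤ g i) {a : ι} {S T : Finset ι} (haS : a ∉ S)
    (hST : S ⊆ T) : g a + ∑ i ∈ S, g i + ∑ i ∈ (insert a T)ᶜ, g i ≤ ∑ i, g i := by
  rw [← sum_insert haS, ← sum_add_sum_compl (insert a T)]
  gcongr
  exact fun _ _ _ => hg _

end Sums

section Colors

variable {V : Type*} {G : SimpleGraph V} {D E : Set V} {a u v : V}

theorem closedNbhd_mono (h : D ⊆ E) : closedNbhd G D ⊆ closedNbhd G E := by
  rintro v (hv | ⟨u, hu, huv⟩)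
  exacts [Or.inl (h hv), Or.inr ⟨u, h hu, huv⟩]

theorem IsWhite.anti (h : D ⊆ E) (hv : IsWhite G E v) : IsWhite G D v :=
  let ⟨hvE, u, huv, huE⟩ := hv
  ⟨fun hvD => hvE (closedNbhd_mono h hvD), u, huv, fun huD => huE (closedNbhd_mono h huD)⟩

theorem IsWhite.notMem (hv : IsWhite G D v) : v ∉ D :=
  fun h => hv.1 (Or.inl h)

theorem IsWhite.not_adj_of_mem (hv : IsWhite G D v) (hu : u ∈ D) : ¬ G.Adj u v :=
  fun h => hv.1 (Or.inr ⟨u, hu, h⟩)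

theorem IsBlue.notMem (hv : IsBlue G D v) : v ∉ D :=
  let ⟨_, _, hvu, hu⟩ := hv
  fun h => hu.not_adj_of_mem h hvu

theorem IsBlue.not_isWhite (hv : IsBlue G D v) : ¬ IsWhite G D v :=
  fun h => h.1 hv.1

theorem isBlue_of_adj_isWhite (hv : ¬ IsWhite G D v) (hvu : G.Adj v u) (hu : IsWhite G D u) :
    IsBlue G D v := by
  by_cases hvD : v ∈ closedNbhd G D
  · exact ⟨hvD, u, hvu, hu⟩
  · exact absurd ⟨hvD, u, hvu, hu.1⟩ hv

theorem resDegree_eq_whiteNbhdCount (hv : ¬ IsWhite G D v) :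
    resDegree G D v = whiteNbhdCount G D v := by
  simp [resDegree, whiteNbhdCount, residualGraph, SimpleGraph.neighborSet, hv]

theorem whiteNbhdCount_eq_zero_of_mem (ha : a ∈ D) : whiteNbhdCount G D a = 0 := by
  have : {u | G.Adj a u ∧ IsWhite G D u} = ∅ :=
    Set.eq_empty_of_forall_notMem fun u hu => hu.2.not_adj_of_mem ha hu.1
  rw [whiteNbhdCount, this, Set.ncard_empty]

theorem whiteNbhdCount_anti [Finite V] (h : D ⊆ E) (v : V) :
    whiteNbhdCount G E v ≤ whiteNbhdCount G D v :=
  Set.ncard_le_ncard fun _ hu => ⟨hu.1, hu.2.anti h⟩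

theorem isBlue_iff_whiteNbhdCount_pos [Finite V] (hv : ¬ IsWhite G D v) :
    IsBlue G D v ↔ 0 < whiteNbhdCount G D v := by
  rw [whiteNbhdCount, Set.ncard_pos]
  exact ⟨And.right, fun ⟨_, hvu, hu⟩ => isBlue_of_adj_isWhite hv hvu hu⟩

theorem whiteNbhdCount_le_of_resDegree_le [Finite V] {Δ : ℕ}
    (hB : ∀ v, IsBlue G D v → resDegree G D v ≤ Δ) (hv : ¬ IsWhite G D v) :
    whiteNbhdCount G D v ≤ Δ := by
  by_cases hb : IsBlue G D v
  · exact resDegree_eq_whiteNbhdCount hv ▸ hB v hb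
  · rw [isBlue_iff_whiteNbhdCount_pos hv] at hb
    omega

end Colors

section WhiteVertices

open Finset

variable {V : Type*} [Fintype V] {G : SimpleGraph V} {D E : Set V} {a s v : V}

/-- The finset of white vertices with respect to `D`, so that white neighborhoods are
intersections of finsets. -/
noncomputable def whiteVertices (G : SimpleGraph V) (D : Set V) : Finset V :=
  {v | IsWhite G D v}

@[simp]
theorem mem_whiteVertices : v ∈ whiteVertices G D ↔ IsWhite G D v := by
  simp [whiteVertices]

theorem whiteVertices_anti (h : D ⊆ E) : whiteVertices G E ⊆ whiteVertices G D := by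
  intro v hv
  rw [mem_whiteVertices] at hv ⊢
  exact hv.anti h

theorem whiteNbhdCount_eq_card (G : SimpleGraph V) (D : Set V) (v : V) :
    whiteNbhdCount G D v = #(G.neighborFinset v ∩ whiteVertices G D) := by
  rw [whiteNbhdCount, ← Set.ncard_coe_finset]
  congr 1
  ext u
  simp

theorem whiteNbhdCount_add_card_inter_le {S : Finset V} (h : D ⊆ E)
    (hSD : S ⊆ whiteVertices G D) (hSE : Disjoint S (whiteVertices G E)) (v : V) :
    whiteNbhdCount G E v + #(G.neighborFinset v ∩ S) ≤ whiteNbhdCount G D v := by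
  have hdisj : Disjoint (G.neighborFinset v ∩ whiteVertices G E) (G.neighborFinset v ∩ S) :=
    hSE.symm.mono inter_subset_right inter_subset_right
  rw [whiteNbhdCount_eq_card, whiteNbhdCount_eq_card, ← card_union_of_disjoint hdisj,
    ← inter_union_distrib_left]
  exact card_le_card (inter_subset_inter_left (union_subset (whiteVertices_anti h) hSD))

theorem whiteNbhdCount_lt_card_inter_insert (h : D ⊆ E) (ha : a ∈ E) (has : G.Adj a s) :
    whiteNbhdCount G E s < #(G.neighborFinset s ∩ insert a (whiteVertices G D)) := by
  rw [whiteNbhdCount_eq_card]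
  refine card_lt_card ⟨?_, fun hsub => ?_⟩
  · exact inter_subset_inter_left ((whiteVertices_anti h).trans (subset_insert _ _))
  · have ha' : a ∈ G.neighborFinset s ∩ whiteVertices G E := hsub (by simp [has.symm])
    exact (mem_whiteVertices.1 (mem_inter.1 ha').2).notMem ha

theorem card_inter_insert_whiteVertices_of_isWhite (ha : IsWhite G D a) (s : V) :
    #(G.neighborFinset s ∩ insert a (whiteVertices G D)) = whiteNbhdCount G D s := by
  rw [insert_eq_of_mem (mem_whiteVertices.2 ha), whiteNbhdCount_eq_card]

theorem card_inter_insert_whiteVertices_le (a s : V) :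
    #(G.neighborFinset s ∩ insert a (whiteVertices G D)) ≤ whiteNbhdCount G D s + 1 := by
  rw [whiteNbhdCount_eq_card]
  exact (card_le_card fun v => by grind).trans (card_insert_le a _)

/-- The white vertices of the closed neighborhood `N[a]`, which stop being white once `a` is
added to `D`. -/
noncomputable def whiteClosedNbhd (G : SimpleGraph V) (D : Set V) (a : V) : Finset V :=
  insert a (G.neighborFinset a) ∩ whiteVertices G D

theorem card_whiteClosedNbhd_of_isWhite (ha : IsWhite G D a) :
    #(whiteClosedNbhd G D a) = whiteNbhdCount G D a + 1 := by
  rw [whiteClosedNbhd, insert_inter_of_mem (mem_whiteVertices.2 ha),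
    card_insert_of_notMem (by simp), whiteNbhdCount_eq_card]

theorem card_whiteClosedNbhd_of_not_isWhite (ha : ¬ IsWhite G D a) :
    #(whiteClosedNbhd G D a) = whiteNbhdCount G D a := by
  rw [whiteClosedNbhd, insert_inter_of_notMem (mem_whiteVertices.not.2 ha), whiteNbhdCount_eq_card]

theorem disjoint_whiteClosedNbhd_whiteVertices (ha : a ∈ E) :
    Disjoint (whiteClosedNbhd G D a) (whiteVertices G E) := by
  rw [disjoint_left]
  intro v hv hvE
  rw [mem_whiteVertices] at hvE
  rcases mem_insert.1 (mem_inter.1 hv).1 with rfl | hav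
  · exact hvE.notMem ha
  · exact hvE.not_adj_of_mem ha ((G.mem_neighborFinset a v).1 hav)

end WhiteVertices

section DoubleCounting

open Finset

variable {V : Type*} [Fintype V] {G : SimpleGraph V}

theorem sum_card_neighborFinset_inter_comm (S T : Finset V) :
    ∑ x ∈ T, #(G.neighborFinset x ∩ S) = ∑ s ∈ S, #(G.neighborFinset s ∩ T) := by
  have hcount := sum_card_bipartiteAbove_eq_sum_card_bipartiteBelow (s := T) (t := S) G.Adj
  have habove (x : V) : S.bipartiteAbove G.Adj x = G.neighborFinset x ∩ S := by
    ext s; simp [and_comm]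
  have hbelow (s : V) : T.bipartiteBelow G.Adj s = G.neighborFinset s ∩ T := by
    ext x; simp [G.adj_comm x s, and_comm]
  simpa only [habove, hbelow] using hcount

theorem card_mul_degree_sub_le_sum_card_neighborFinset_inter_compl {S T : Finset V} {δ k : ℕ}
    (hδ : ∀ s ∈ S, δ ≤ G.degree s) (hk : ∀ s ∈ S, #(G.neighborFinset s ∩ T) ≤ k) :
    #S * ((δ : ℝ) - k) ≤ ∑ x ∈ Tᶜ, (#(G.neighborFinset x ∩ S) : ℝ) := by
  have hcompl (s : V) (hs : s ∈ S) : (δ : ℝ) - k ≤ #(G.neighborFinset s ∩ Tᶜ) := by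
    have hsplit : #(G.neighborFinset s ∩ T) + #(G.neighborFinset s ∩ Tᶜ) = G.degree s := by
      rw [← sdiff_eq_inter_compl, card_inter_add_card_sdiff,
        SimpleGraph.card_neighborFinset_eq_degree]
    have hδk : δ ≤ k + #(G.neighborFinset s ∩ Tᶜ) := by linarith [hδ s hs, hk s hs]
    rw [sub_le_iff_le_add']
    exact_mod_cast hδk
  calc #S * ((δ : ℝ) - k) = #S • ((δ : ℝ) - k) := (nsmul_eq_mul _ _).symm
    _ ≤ ∑ s ∈ S, (#(G.neighborFinset s ∩ Tᶜ) : ℝ) := card_nsmul_le_sum _ _ _ hcompl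
    _ = ∑ x ∈ Tᶜ, (#(G.neighborFinset x ∩ S) : ℝ) :=
      mod_cast (sum_card_neighborFinset_inter_comm S Tᶜ).symm

end DoubleCounting

section ColorWeight

open Finset

variable {V : Type*} {G : SimpleGraph V} {D E : Set V} {a v : V} {ω ε : ℝ} {f : ℕ → ℝ}

/-- The weight of a vertex when white vertices weigh `ω` and every other vertex weighs `f d`, where
`d` is its number of white neighbors; red vertices are those with `d = 0`. -/
noncomputable def colorWeight (G : SimpleGraph V) (D : Set V) (ω : ℝ) (f : ℕ → ℝ) (v : V) : ℝ :=
  if IsWhite G D v then ω else f (whiteNbhdCount G D v)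

theorem colorWeight_of_isWhite (hv : IsWhite G D v) : colorWeight G D ω f v = ω :=
  if_pos hv

theorem colorWeight_of_not_isWhite (hv : ¬ IsWhite G D v) :
    colorWeight G D ω f v = f (whiteNbhdCount G D v) :=
  if_neg hv

theorem colorWeight_eq_zero_of_mem (hf0 : f 0 = 0) (ha : a ∈ D) : colorWeight G D ω f a = 0 := by
  rw [colorWeight_of_not_isWhite fun h => h.notMem ha, whiteNbhdCount_eq_zero_of_mem ha, hf0]

theorem colorWeight_anti [Finite V] (hf : Monotone f) (hfω : ∀ d, f d ≤ ω) (h : D ⊆ E) (v : V) :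
    colorWeight G E ω f v ≤ colorWeight G D ω f v := by
  by_cases hvE : IsWhite G E v
  · rw [colorWeight_of_isWhite hvE, colorWeight_of_isWhite (hvE.anti h)]
  rw [colorWeight_of_not_isWhite hvE]
  by_cases hvD : IsWhite G D v
  · exact (hfω _).trans_eq (colorWeight_of_isWhite hvD).symm
  · rw [colorWeight_of_not_isWhite hvD]
    exact hf (whiteNbhdCount_anti h v)

theorem sub_le_colorWeight_sub {r : ℕ} (hf : Monotone f) (hvD : IsWhite G D v)
    (hvE : ¬ IsWhite G E v) (hr : whiteNbhdCount G E v ≤ r) :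
    ω - f r ≤ colorWeight G D ω f v - colorWeight G E ω f v := by
  rw [colorWeight_of_isWhite hvD, colorWeight_of_not_isWhite hvE]
  exact sub_le_sub_left (hf hr) ω

theorem mul_card_inter_le_colorWeight_sub [Fintype V] {S : Finset V} {Δ : ℕ} (hε : 0 ≤ ε)
    (hfε : ∀ i < Δ, ε ≤ f (i + 1) - f i) (h : D ⊆ E) (hSD : S ⊆ whiteVertices G D)
    (hSE : Disjoint S (whiteVertices G E)) (hv : ¬ IsWhite G D v)
    (hΔ : whiteNbhdCount G D v ≤ Δ) :
    ε * #(G.neighborFinset v ∩ S) ≤ colorWeight G D ω f v - colorWeight G E ω f v := by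
  rw [colorWeight_of_not_isWhite hv, colorWeight_of_not_isWhite fun hvE => hv (hvE.anti h)]
  have hloss : (whiteNbhdCount G E v : ℝ) + #(G.neighborFinset v ∩ S) ≤ whiteNbhdCount G D v :=
    mod_cast whiteNbhdCount_add_card_inter_le h hSD hSE v
  calc ε * #(G.neighborFinset v ∩ S)
      ≤ ε * ((whiteNbhdCount G D v : ℝ) - whiteNbhdCount G E v) :=
        mul_le_mul_of_nonneg_left (by linarith) hε
    _ ≤ f (whiteNbhdCount G D v) - f (whiteNbhdCount G E v) :=
        mul_sub_le_sub_of_forall_lt hfε (whiteNbhdCount_anti h v) hΔ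

end ColorWeight

section WeightDrop

open Finset

variable {V : Type*} [Fintype V] {G : SimpleGraph V} {D E : Set V} {a : V}
  {ω ε : ℝ} {f : ℕ → ℝ} {Δ δ r : ℕ}

theorem card_mul_le_sum_compl_colorWeight_sub (hε : 0 ≤ ε)
    (hfε : ∀ i < Δ, ε ≤ f (i + 1) - f i) (h : D ⊆ E) (ha : a ∈ E)
    (hΔ : ∀ v, ¬ IsWhite G D v → whiteNbhdCount G D v ≤ Δ)
    (hδ : ∀ s ∈ whiteClosedNbhd G D a, δ ≤ G.degree s)
    (hr : ∀ s ∈ whiteClosedNbhd G D a, #(G.neighborFinset s ∩ insert a (whiteVertices G D)) ≤ r) :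
    #(whiteClosedNbhd G D a) * ((δ : ℝ) - r) * ε ≤
      ∑ v ∈ (insert a (whiteVertices G D))ᶜ, (colorWeight G D ω f v - colorWeight G E ω f v) := by
  calc #(whiteClosedNbhd G D a) * ((δ : ℝ) - r) * ε
      ≤ (∑ v ∈ (insert a (whiteVertices G D))ᶜ,
          (#(G.neighborFinset v ∩ whiteClosedNbhd G D a) : ℝ)) * ε :=
        mul_le_mul_of_nonneg_right
          (card_mul_degree_sub_le_sum_card_neighborFinset_inter_compl hδ hr) hε
    _ = ∑ v ∈ (insert a (whiteVertices G D))ᶜ,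
          ε * (#(G.neighborFinset v ∩ whiteClosedNbhd G D a) : ℝ) := by
        rw [mul_comm, mul_sum]
    _ ≤ _ := sum_le_sum fun v hv => by
        have hvD : ¬ IsWhite G D v := fun hvD => by simp [hvD] at hv
        exact mul_card_inter_le_colorWeight_sub hε hfε h inter_subset_right
          (disjoint_whiteClosedNbhd_whiteVertices ha) hvD (hΔ v hvD)

theorem whiteNbhdCount_mul_le_sum_colorWeight_sub (hf : Monotone f) (h : D ⊆ E) (ha : a ∈ E)
    (hr : ∀ s ∈ whiteClosedNbhd G D a,
      #(G.neighborFinset s ∩ insert a (whiteVertices G D)) ≤ r + 1) :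
    whiteNbhdCount G D a * (ω - f r) ≤
      ∑ v ∈ G.neighborFinset a ∩ whiteVertices G D,
        (colorWeight G D ω f v - colorWeight G E ω f v) := by
  rw [whiteNbhdCount_eq_card, ← nsmul_eq_mul]
  refine card_nsmul_le_sum _ _ _ fun s hs => ?_
  obtain ⟨has, hsD⟩ : G.Adj a s ∧ IsWhite G D s := by simpa using hs
  have hsr := hr s (inter_subset_inter_right (subset_insert _ _) hs)
  have hlt := whiteNbhdCount_lt_card_inter_insert h ha has
  exact sub_le_colorWeight_sub hf hsD (fun hsE => hsE.not_adj_of_mem ha has) (by omega)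

theorem add_le_sum_colorWeight_sub (hf0 : f 0 = 0) (hf : Monotone f) (hfω : ∀ d, f d ≤ ω)
    (hε : 0 ≤ ε) (hfε : ∀ i < Δ, ε ≤ f (i + 1) - f i) (h : D ⊆ E) (ha : a ∈ E)
    (hΔ : ∀ v, ¬ IsWhite G D v → whiteNbhdCount G D v ≤ Δ)
    (hδ : ∀ s ∈ whiteClosedNbhd G D a, δ ≤ G.degree s)
    (hr : ∀ s ∈ whiteClosedNbhd G D a,
      #(G.neighborFinset s ∩ insert a (whiteVertices G D)) ≤ r + 1) :
    colorWeight G D ω f a + whiteNbhdCount G D a * (ω - f r) +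
        #(whiteClosedNbhd G D a) * ((δ : ℝ) - (r + 1 : ℕ)) * ε ≤
      ∑ v, colorWeight G D ω f v - ∑ v, colorWeight G E ω f v := by
  have hsplit := add_sum_add_sum_compl_le_sum (a := a)
    (fun v => sub_nonneg.2 (colorWeight_anti (G := G) hf hfω h v))
    (S := G.neighborFinset a ∩ whiteVertices G D) (by simp) inter_subset_right
  have hself := colorWeight_eq_zero_of_mem (G := G) (ω := ω) hf0 ha
  have hnbrs := whiteNbhdCount_mul_le_sum_colorWeight_sub (ω := ω) hf h ha hr
  have hcompl := card_mul_le_sum_compl_colorWeight_sub (ω := ω) hε hfε h ha hΔ hδ hr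
  rw [← sum_sub_distrib]
  linarith

end WeightDrop

section BlueWeight

variable {ω β1 β2 β3 β4 : ℝ}

/-- The weight of a blue vertex as a function of its degree in the residual graph, extended by `0`
to degree `0`, so that it gives the weight of red vertices as well. -/
def blueWeight (β1 β2 β3 β4 : ℝ) : ℕ → ℝ
  | 0 => 0
  | 1 => β1
  | 2 => β2
  | 3 => β3
  | _ + 4 => β4

theorem le_blueWeight_succ_sub (he1 : β4 - β3 ≤ β3 - β2) (he2 : β3 - β2 ≤ β2 - β1)
    (he3 : β2 - β1 ≤ β1) (d : ℕ) (hd : d < 4) :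
    β4 - β3 ≤ blueWeight β1 β2 β3 β4 (d + 1) - blueWeight β1 β2 β3 β4 d := by
  interval_cases d <;> simp only [blueWeight] <;> linarith

theorem monotone_blueWeight (hm2 : β3 ≤ β4) (he1 : β4 - β3 ≤ β3 - β2) (he2 : β3 - β2 ≤ β2 - β1)
    (he3 : β2 - β1 ≤ β1) : Monotone (blueWeight β1 β2 β3 β4) := by
  refine monotone_nat_of_le_succ fun d => ?_
  rcases lt_or_ge d 4 with hd | hd
  · linarith [le_blueWeight_succ_sub he1 he2 he3 d hd]
  · obtain ⟨k, rfl⟩ := Nat.exists_eq_add_of_le' hd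
    rfl

theorem blueWeight_le (hm1 : β4 ≤ ω) (hβ : Monotone (blueWeight β1 β2 β3 β4)) (d : ℕ) :
    blueWeight β1 β2 β3 β4 d ≤ ω :=
  (hβ (Nat.le_add_right d 4)).trans hm1

variable {V : Type*} {G : SimpleGraph V} {D : Set V} {a : V}

theorem vertexWeight_eq_colorWeight [Finite V] (G : SimpleGraph V) (D : Set V)
    (ω β1 β2 β3 β4 : ℝ) :
    vertexWeight G D ω β1 β2 β3 β4 = colorWeight G D ω (blueWeight β1 β2 β3 β4) := by
  funext v
  by_cases hv : IsWhite G D v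
  · rw [colorWeight_of_isWhite hv, vertexWeight, if_pos hv]
  rw [colorWeight_of_not_isWhite hv, vertexWeight, if_neg hv, isBlue_iff_whiteNbhdCount_pos hv,
    resDegree_eq_whiteNbhdCount hv]
  rcases whiteNbhdCount G D v with _ | _ | _ | _ | d <;> simp [blueWeight]

variable [Fintype V]

theorem totalWeight_eq_sum_colorWeight (G : SimpleGraph V) (D : Set V) (ω β1 β2 β3 β4 : ℝ) :
    totalWeight G D ω β1 β2 β3 β4 = ∑ v, colorWeight G D ω (blueWeight β1 β2 β3 β4) v := by
  rw [totalWeight, vertexWeight_eq_colorWeight]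

theorem desirable_singleton_iff :
    Desirable G ω β1 β2 β3 β4 D {a} ↔
      a ∉ D ∧ 1 ≤ totalWeight G D ω β1 β2 β3 β4 - totalWeight G (D ∪ {a}) ω β1 β2 β3 β4 := by
  rw [Desirable, Set.singleton_subset_iff, Set.mem_compl_iff, Set.ncard_singleton, Nat.cast_one]

open Finset in
theorem add_le_totalWeight_sub {δ : ℕ} (hm1 : β4 ≤ ω) (hm2 : β3 ≤ β4)
    (he1 : β4 - β3 ≤ β3 - β2) (he2 : β3 - β2 ≤ β2 - β1) (he3 : β2 - β1 ≤ β1)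
    (hmin : ∀ v, IsWhite G D v → δ ≤ (G.neighborSet v).ncard)
    (hB : ∀ v, IsBlue G D v → resDegree G D v ≤ 4)
    (hr : ∀ s, IsWhite G D s → #(G.neighborFinset s ∩ insert a (whiteVertices G D)) ≤ 3) :
    vertexWeight G D ω β1 β2 β3 β4 a + whiteNbhdCount G D a * (ω - β2) +
        #(whiteClosedNbhd G D a) * ((δ : ℝ) - 3) * (β4 - β3) ≤
      totalWeight G D ω β1 β2 β3 β4 - totalWeight G (D ∪ {a}) ω β1 β2 β3 β4 := by
  have hβ := monotone_blueWeight hm2 he1 he2 he3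
  have hwhite {s : V} (hs : s ∈ whiteClosedNbhd G D a) : IsWhite G D s :=
    mem_whiteVertices.1 (mem_inter.1 hs).2
  have hdegree (v : V) : G.degree v = (G.neighborSet v).ncard :=
    (Set.ncard_eq_toFinset_card' _).symm
  rw [vertexWeight_eq_colorWeight, totalWeight_eq_sum_colorWeight, totalWeight_eq_sum_colorWeight]
  exact add_le_sum_colorWeight_sub (r := 2) rfl hβ (blueWeight_le hm1 hβ) (sub_nonneg.2 hm2)
    (le_blueWeight_succ_sub he1 he2 he3) Set.subset_union_left (Or.inr rfl)
    (fun _ => whiteNbhdCount_le_of_resDegree_le hB)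
    (fun s hs => (hmin s (hwhite hs)).trans_eq (hdegree s).symm) (fun s hs => hr s (hwhite hs))

theorem desirable_singleton_of_isWhite {δ : ℕ} (hm1 : β4 ≤ ω) (hm2 : β3 ≤ β4)
    (he1 : β4 - β3 ≤ β3 - β2) (he2 : β3 - β2 ≤ β2 - β1) (he3 : β2 - β1 ≤ β1)
    (hc : 1 ≤ ω + 3 * (ω - β2) + 4 * ((δ : ℝ) - 3) * (β4 - β3))
    (hmin : ∀ v, IsWhite G D v → δ ≤ (G.neighborSet v).ncard)
    (hW : ∀ v, IsWhite G D v → whiteNbhdCount G D v ≤ 3)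
    (hB : ∀ v, IsBlue G D v → resDegree G D v ≤ 4)
    (ha : IsWhite G D a) (ha3 : whiteNbhdCount G D a = 3) :
    Desirable G ω β1 β2 β3 β4 D {a} := by
  have hdrop := add_le_totalWeight_sub (a := a) hm1 hm2 he1 he2 he3 hmin hB fun s hs =>
    (card_inter_insert_whiteVertices_of_isWhite ha s).trans_le (hW s hs)
  rw [vertexWeight_eq_colorWeight, colorWeight_of_isWhite ha, card_whiteClosedNbhd_of_isWhite ha,
    ha3] at hdrop
  exact desirable_singleton_iff.2 ⟨ha.notMem, hc.trans (by exact_mod_cast hdrop)⟩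

theorem desirable_singleton_of_isBlue {δ : ℕ} (hm1 : β4 ≤ ω) (hm2 : β3 ≤ β4)
    (he1 : β4 - β3 ≤ β3 - β2) (he2 : β3 - β2 ≤ β2 - β1) (he3 : β2 - β1 ≤ β1)
    (hc : 1 ≤ β4 + 4 * (ω - β2) + 4 * ((δ : ℝ) - 3) * (β4 - β3))
    (hmin : ∀ v, IsWhite G D v → δ ≤ (G.neighborSet v).ncard)
    (hW : ∀ v, IsWhite G D v → whiteNbhdCount G D v ≤ 2)
    (hB : ∀ v, IsBlue G D v → resDegree G D v ≤ 4)
    (ha : IsBlue G D a) (ha4 : resDegree G D a = 4) :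
    Desirable G ω β1 β2 β3 β4 D {a} := by
  have hdrop := add_le_totalWeight_sub (a := a) hm1 hm2 he1 he2 he3 hmin hB fun s hs =>
    (card_inter_insert_whiteVertices_le a s).trans (Nat.succ_le_succ (hW s hs))
  rw [vertexWeight_eq_colorWeight, colorWeight_of_not_isWhite ha.not_isWhite,
    card_whiteClosedNbhd_of_not_isWhite ha.not_isWhite,
    ← resDegree_eq_whiteNbhdCount ha.not_isWhite, ha4] at hdrop
  exact desirable_singleton_iff.2 ⟨ha.notMem, hc.trans (by exact_mod_cast hdrop)⟩

end BlueWeight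

theorem exists_singleton_desirable_of_small_general (δ : ℕ)
    {V : Type*} [Fintype V] (G : SimpleGraph V) (D : Set V)
    (hmin : ∀ v, IsWhite G D v → δ ≤ (G.neighborSet v).ncard) (ω β1 β2 β3 β4 : ℝ)
    (hm1 : β4 ≤ ω) (hm2 : β3 ≤ β4)
    (he1 : β4 - β3 ≤ β3 - β2) (he2 : β3 - β2 ≤ β2 - β1) (he3 : β2 - β1 ≤ β1)
    (hc2a : 1 ≤ ω + 3 * (ω - β2) + 4 * ((δ : ℝ) - 3) * (β4 - β3))
    (hc2b : 1 ≤ β4 + 4 * (ω - β2) + 4 * ((δ : ℝ) - 3) * (β4 - β3))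
    (hW : ∀ v, IsWhite G D v → whiteNbhdCount G D v ≤ 3)
    (hB : ∀ v, IsBlue G D v → resDegree G D v ≤ 4)
    (h : (∃ v, IsWhite G D v ∧ whiteNbhdCount G D v = 3) ∨
         (∃ v, IsBlue G D v ∧ resDegree G D v = 4)) :
    ∃ a : V, Desirable G ω β1 β2 β3 β4 D {a} := by
  by_cases hwhite : ∃ v, IsWhite G D v ∧ whiteNbhdCount G D v = 3
  · obtain ⟨a, ha, ha3⟩ := hwhite
    exact ⟨a, desirable_singleton_of_isWhite hm1 hm2 he1 he2 he3 hc2a hmin hW hB ha ha3⟩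
  · obtain ⟨a, ha, ha4⟩ := h.resolve_left hwhite
    have hW2 (v : V) (hv : IsWhite G D v) : whiteNbhdCount G D v ≤ 2 :=
      Nat.le_of_lt_succ ((hW v hv).lt_of_ne fun hv3 => hwhite ⟨v, hv, hv3⟩)
    exact ⟨a, desirable_singleton_of_isBlue hm1 hm2 he1 he2 he3 hc2b hmin hW2 hB ha ha4⟩

/-- Claim 2: under the degree assumptions, if some white vertex has exactly 3 white
neighbors or some blue vertex has degree exactly 4 in `G_D^ι`, then there is a
singleton `D`-desirable set. -/
theorem exists_singleton_desirable_of_small (δ : ℕ) (hδ : 3 ≤ δ)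
    {V : Type*} [Fintype V] (G : SimpleGraph V)
    (hmin : ∀ v : V, δ ≤ (G.neighborSet v).ncard) (D : Set V) (ω β1 β2 β3 β4 : ℝ)
    (hm1 : ω ≥ β4) (hm2 : β4 ≥ β3) (hm3 : β3 ≥ β2) (hm4 : β2 ≥ β1) (hm5 : β1 > 0)
    (he1 : β4 - β3 ≤ β3 - β2) (he2 : β3 - β2 ≤ β2 - β1) (he3 : β2 - β1 ≤ β1)
    (hc2a : ω + 3 * (ω - β2) + 4 * ((δ : ℝ) - 3) * (β4 - β3) ≥ 1)
    (hc2b : β4 + 4 * (ω - β2) + 4 * ((δ : ℝ) - 3) * (β4 - β3) ≥ 1)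
    (hW : ∀ v, IsWhite G D v → whiteNbhdCount G D v ≤ 3)
    (hB : ∀ v, IsBlue G D v → resDegree G D v ≤ 4)
    (h : (∃ v, IsWhite G D v ∧ whiteNbhdCount G D v = 3) ∨
         (∃ v, IsBlue G D v ∧ resDegree G D v = 4)) :
    ∃ a : V, Desirable G ω β1 β2 β3 β4 D {a} := by
  exact exists_singleton_desirable_of_small_general δ G D (fun v _ => hmin v) ω β1 β2 β3 β4
    hm1 hm2 he1 he2 he3 hc2a hc2b hW hB h
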